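/- (Galerkin case of the error representation) In the setting of the error representation theorem, suppose additionally that V_h is a subspace of V, that ũ = u_h ∈ U satisfies the discrete primal problem A(u_h)(v_h) = 0 for all v_h ∈ V_h, and that z̃ ∈ V_h. Then ρ(u_h)(z̃) = 0, and consequently J(u) − J(u_h) = (1/2)ρ(u_h)(z − z̃) + (1/2)ρ*(u_h, z̃)(u − u_h) + R, with ρ, ρ* and the remainder R defined as in the error representation theorem (with e = u − u_h, e* = z − z̃). -/

import Mathlib

/-!
With the Lagrangian `L(u, z) = J u - A u z`, the primal and adjoint problems together say that
`(u, z)` is a critical point of `L`. Integrate `L'` along the segment from `(u_h, z̃)` to `(u, z)`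
by the trapezoidal rule with Peano remainder. The endpoint `(u, z)` contributes nothing, the other
endpoint contributes half of each residual, and the remainder is the third derivative of `L`, which
expands by Leibniz' rule because `L` is affine in `z`. Since `L(u, z) = J u` and
`L(u_h, z̃) = J u_h + ρ(u_h)(z̃)`, it remains to use that `ρ(u_h)` vanishes on `V_h`.
-/

section TrapezoidalRule

open Set MeasureTheory

variable {E F : Type*} [NormedAddCommGroup E] [NormedSpace ℝ E]
  [NormedAddCommGroup F] [NormedSpace ℝ F] [CompleteSpace F]

theorem integral_sub_mul_sub_smul_third_deriv {g g' g'' g''' : ℝ → F} {a b : ℝ}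
    (hg : ∀ t ∈ uIcc a b, HasDerivAt g (g' t) t)
    (hg' : ∀ t ∈ uIcc a b, HasDerivAt g' (g'' t) t)
    (hg'' : ∀ t ∈ uIcc a b, HasDerivAt g'' (g''' t) t)
    (hint : IntervalIntegrable g''' volume a b) :
    ∫ t in a..b, ((t - a) * (t - b)) • g''' t =
      (2 : ℝ) • (g b - g a) - (b - a) • (g' a + g' b) := by
  -- `G` collects the boundary terms of three integrations by parts.
  let G : ℝ → F := fun t ↦
    ((t - a) * (t - b)) • g'' t - (2 * t - a - b) • g' t + (2 : ℝ) • g t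
  have hG : ∀ t ∈ uIcc a b, HasDerivAt G (((t - a) * (t - b)) • g''' t) t := by
    intro t ht
    have hquad : HasDerivAt (fun t : ℝ ↦ (t - a) * (t - b)) (1 * (t - b) + (t - a) * 1) t :=
      ((hasDerivAt_id t).sub_const a).mul ((hasDerivAt_id t).sub_const b)
    have hlin : HasDerivAt (fun t : ℝ ↦ 2 * t - a - b) (2 * 1) t :=
      (((hasDerivAt_id t).const_mul 2).sub_const a).sub_const b
    refine (((hquad.smul (hg'' t ht)).sub (hlin.smul (hg' t ht))).add
      ((hg t ht).const_smul (2 : ℝ))).congr_deriv ?_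
    module
  rw [intervalIntegral.integral_eq_sub_of_hasDerivAt hG (hint.continuousOn_smul (by fun_prop))]
  module

theorem map_add_sub_eq_trapezoid_add_integral {f : E → F} {x y : E}
    (hf : ∀ t ∈ Icc (0 : ℝ) 1, ContDiffAt ℝ 3 f (x + t • y)) :
    f (x + y) - f x = (1 / 2 : ℝ) • (fderiv ℝ f x y + fderiv ℝ f (x + y) y) +
      (1 / 2 : ℝ) • ∫ t in (0 : ℝ)..1,
        (t * (t - 1)) • iteratedFDeriv ℝ 3 f (x + t • y) (fun _ ↦ y) := by
  rw [← uIcc_of_le zero_le_one] at hf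
  let D : ℕ → ℝ → F := fun n t ↦ iteratedFDeriv ℝ n f (x + t • y) (fun _ ↦ y)
  have hD (n : ℕ) (hn : n < 3) : ∀ t ∈ uIcc (0 : ℝ) 1, HasDerivAt (D n) (D (n + 1) t) t := by
    intro t ht
    have hdiff : DifferentiableAt ℝ (iteratedFDeriv ℝ n f) (x + t • y) :=
      (hf t ht).differentiableAt_iteratedFDeriv (mod_cast hn)
    have hDn : DifferentiableAt ℝ (D n) t := by fun_prop
    have hderiv : deriv (D n) t = D (n + 1) t :=
      ((hf t ht).of_le (mod_cast hn)).deriv_fderiv_add_smul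
    exact hderiv ▸ hDn.hasDerivAt
  have hcont : ContinuousOn (D 3) (uIcc 0 1) := fun t ht ↦
    have h3 : ContinuousAt (iteratedFDeriv ℝ 3 f) (x + t • y) :=
      ((hf t ht).iteratedFDeriv_right (i := 3) (m := 0) (by simp)).continuousAt
    (h3.comp (x := t) (by fun_prop)).continuousWithinAt.eval_const _
  have hPeano := integral_sub_mul_sub_smul_third_deriv (hD 0 (by norm_num)) (hD 1 (by norm_num))
    (hD 2 (by norm_num)) hcont.intervalIntegrable
  simp only [D, Nat.reduceAdd, iteratedFDeriv_zero_apply, iteratedFDeriv_one_apply, sub_zero,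
    one_smul, zero_smul, add_zero] at hPeano
  rw [hPeano]
  module

end TrapezoidalRule

section Lagrangian

variable {𝕜 U V F : Type*} [NontriviallyNormedField 𝕜] [NormedAddCommGroup U] [NormedSpace 𝕜 U]
  [NormedAddCommGroup V] [NormedSpace 𝕜 V] [NormedAddCommGroup F] [NormedSpace 𝕜 F]
  {A : U → V →L[𝕜] F} {J : U → F}

theorem fderiv_clm_apply_fst_snd {p : U × V} (hA : DifferentiableAt 𝕜 A p.1) (w : U × V) :
    fderiv 𝕜 (fun q : U × V ↦ A q.1 q.2) p w = fderiv 𝕜 A p.1 w.1 p.2 + A p.1 w.2 := by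
  have h : HasFDerivAt (fun q : U × V ↦ A q.1 q.2) _ p :=
    (hA.hasFDerivAt.comp p hasFDerivAt_fst).clm_apply hasFDerivAt_snd
  simp [h.fderiv, add_comm]

theorem iteratedFDeriv_succ_clm_apply_fst_snd_apply_const {n : ℕ} (hA : ContDiff 𝕜 (n + 1) A)
    (p w : U × V) :
    iteratedFDeriv 𝕜 (n + 1) (fun q : U × V ↦ A q.1 q.2) p (fun _ ↦ w) =
      iteratedFDeriv 𝕜 (n + 1) A p.1 (fun _ ↦ w.1) p.2 +
        (n + 1) • iteratedFDeriv 𝕜 n A p.1 (fun _ ↦ w.1) w.2 := by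
  induction n generalizing p with
  | zero =>
    simpa using fderiv_clm_apply_fst_snd (hA.differentiable (by simp) p.1) w
  | succ n ih =>
    let B : ℕ → U → V →L[𝕜] F := fun k u ↦ iteratedFDeriv 𝕜 k A u (fun _ ↦ w.1)
    have hB (k : ℕ) (hk : k < n + 2) (u : U) :
        DifferentiableAt 𝕜 (B k) u ∧ fderiv 𝕜 (B k) u w.1 = B (k + 1) u :=
      have hk' : DifferentiableAt 𝕜 (iteratedFDeriv 𝕜 k A) u :=
        hA.differentiable_iteratedFDeriv (mod_cast hk) u
      ⟨hk'.continuousMultilinear_apply_const _,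
        (hk'.iteratedFDeriv_succ_apply_left' (m := fun _ ↦ w.1)).symm⟩
    obtain ⟨hBn, hBn'⟩ := hB n (by lia) p.1
    obtain ⟨hBs, hBs'⟩ := hB (n + 1) (by lia) p.1
    have hApp : ContDiff 𝕜 (n + 2 : ℕ) (fun q : U × V ↦ A q.1 q.2) :=
      ((hA.of_le (by norm_cast)).comp contDiff_fst).clm_apply contDiff_snd
    have hApp' : DifferentiableAt 𝕜 (iteratedFDeriv 𝕜 (n + 1) fun q : U × V ↦ A q.1 q.2) p :=
      hApp.differentiable_iteratedFDeriv (mod_cast lt_add_one _) p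
    have hfst : HasFDerivAt (fun q : U × V ↦ B n q.1 w.2) _ p :=
      (hBn.hasFDerivAt.comp p hasFDerivAt_fst).clm_apply (hasFDerivAt_const w.2 p)
    have hsnd : DifferentiableAt 𝕜 (fun q : U × V ↦ B (n + 1) q.1 q.2) p :=
      (hBs.comp p differentiableAt_fst).clm_apply differentiableAt_snd
    calc iteratedFDeriv 𝕜 (n + 2) (fun q : U × V ↦ A q.1 q.2) p (fun _ ↦ w)
      _ = fderiv 𝕜 (fun q : U × V ↦ B (n + 1) q.1 q.2 + (n + 1) • B n q.1 w.2) p w := by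
        rw [hApp'.iteratedFDeriv_succ_apply_left']
        exact congrArg (fun f ↦ fderiv 𝕜 f p w)
          (funext fun q ↦ ih (hA.of_le (by norm_cast; lia)) q)
      _ = B (n + 2) p.1 p.2 + B (n + 1) p.1 w.2 + (n + 1) • B (n + 1) p.1 w.2 := by
        rw [(hsnd.hasFDerivAt.fun_add (hfst.fun_const_smul (n + 1))).fderiv]
        simp [fderiv_clm_apply_fst_snd hBs, hBs', hBn']
      _ = B (n + 2) p.1 p.2 + (n + 2) • B (n + 1) p.1 w.2 := by
        module

/-- The Lagrangian `L(u, z) = J u - A u z` of the problem of evaluating the goal functional `J`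
subject to the constraint `A u = 0`, with `z` as the multiplier. The two arguments are paired, so
that derivatives of `L` are taken jointly in `(u, z)`. -/
def lagrangian (A : U → V →L[𝕜] F) (J : U → F) (p : U × V) : F :=
  J p.1 - A p.1 p.2

theorem fderiv_lagrangian_apply {p : U × V} (hA : DifferentiableAt 𝕜 A p.1)
    (hJ : DifferentiableAt 𝕜 J p.1) (w : U × V) :
    fderiv 𝕜 (lagrangian A J) p w =
      fderiv 𝕜 J p.1 w.1 - fderiv 𝕜 A p.1 w.1 p.2 - A p.1 w.2 := by
  have hJfst : HasFDerivAt (fun q : U × V ↦ J q.1) _ p := hJ.hasFDerivAt.comp p hasFDerivAt_fst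
  have hpair : DifferentiableAt 𝕜 (fun q : U × V ↦ A q.1 q.2) p :=
    (hA.comp p differentiableAt_fst).clm_apply differentiableAt_snd
  have hL : HasFDerivAt (lagrangian A J) _ p := hJfst.fun_sub hpair.hasFDerivAt
  simp [hL.fderiv, fderiv_clm_apply_fst_snd hA, sub_add_eq_sub_sub]

theorem fderiv_lagrangian_eq_zero {u : U} {z : V} (hA : DifferentiableAt 𝕜 A u)
    (hJ : DifferentiableAt 𝕜 J u) (hu : ∀ v, A u v = 0)
    (hz : ∀ φ, fderiv 𝕜 A u φ z = fderiv 𝕜 J u φ) :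
    fderiv 𝕜 (lagrangian A J) (u, z) = 0 := by
  ext w <;> simp [fderiv_lagrangian_apply (p := (u, z)) hA hJ, hu, hz]

theorem contDiff_lagrangian {n : WithTop ℕ∞} (hA : ContDiff 𝕜 n A) (hJ : ContDiff 𝕜 n J) :
    ContDiff 𝕜 n (lagrangian A J) :=
  (hJ.comp contDiff_fst).sub ((hA.comp contDiff_fst).clm_apply contDiff_snd)

theorem iteratedFDeriv_succ_lagrangian_apply_const {n : ℕ} (hA : ContDiff 𝕜 (n + 1) A)
    (hJ : ContDiff 𝕜 (n + 1) J) (p w : U × V) :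
    iteratedFDeriv 𝕜 (n + 1) (lagrangian A J) p (fun _ ↦ w) =
      iteratedFDeriv 𝕜 (n + 1) J p.1 (fun _ ↦ w.1) -
        iteratedFDeriv 𝕜 (n + 1) A p.1 (fun _ ↦ w.1) p.2 -
        (n + 1) • iteratedFDeriv 𝕜 n A p.1 (fun _ ↦ w.1) w.2 := by
  have hJfst : iteratedFDeriv 𝕜 (n + 1) (fun q : U × V ↦ J q.1) p (fun _ ↦ w) =
      iteratedFDeriv 𝕜 (n + 1) J p.1 (fun _ ↦ w.1) := by
    have h := (ContinuousLinearMap.fst 𝕜 U V).iteratedFDeriv_comp_right hJ p le_rfl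
    exact DFunLike.congr_fun h _
  have hsub : iteratedFDeriv 𝕜 (n + 1) (lagrangian A J) p =
      iteratedFDeriv 𝕜 (n + 1) (fun q : U × V ↦ J q.1) p -
        iteratedFDeriv 𝕜 (n + 1) (fun q : U × V ↦ A q.1 q.2) p :=
    iteratedFDeriv_sub_apply (hJ.comp contDiff_fst).contDiffAt
      ((hA.comp contDiff_fst).clm_apply contDiff_snd).contDiffAt
  rw [hsub, sub_apply, hJfst, iteratedFDeriv_succ_clm_apply_fst_snd_apply_const hA,
    sub_add_eq_sub_sub]

end Lagrangian

section ErrorRepresentation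

variable {U V F : Type*} [NormedAddCommGroup U] [NormedSpace ℝ U]
  [NormedAddCommGroup V] [NormedSpace ℝ V] [NormedAddCommGroup F] [NormedSpace ℝ F]
  [CompleteSpace F]

theorem error_representation (A : U → V →L[ℝ] F) (J : U → F)
    (hA : ContDiff ℝ 3 A) (hJ : ContDiff ℝ 3 J) (u : U) (z : V)
    (hu : ∀ v, A u v = 0) (hz : ∀ φ, fderiv ℝ A u φ z = fderiv ℝ J u φ) (ut : U) (zt : V) :
    J u - J ut = (1 / 2 : ℝ) • (-(A ut)) (z - zt) +
      (1 / 2 : ℝ) • (fderiv ℝ J ut (u - ut) - fderiv ℝ A ut (u - ut) zt) + (-(A ut)) zt +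
      (1 / 2 : ℝ) • ∫ s in (0 : ℝ)..1, (s * (s - 1)) •
        (iteratedFDeriv ℝ 3 J (ut + s • (u - ut)) (fun _ ↦ u - ut) -
          iteratedFDeriv ℝ 3 A (ut + s • (u - ut)) (fun _ ↦ u - ut) (zt + s • (z - zt)) -
          3 • iteratedFDeriv ℝ 2 A (ut + s • (u - ut)) (fun _ ↦ u - ut) (z - zt)) := by
  have hA' : Differentiable ℝ A := hA.differentiable (by norm_num)
  have hJ' : Differentiable ℝ J := hJ.differentiable (by norm_num)
  have htrap := map_add_sub_eq_trapezoid_add_integral (x := (ut, zt)) (y := (u - ut, z - zt))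
    fun t _ ↦ (contDiff_lagrangian hA hJ).contDiffAt
  have hend : (ut, zt) + (u - ut, z - zt) = (u, z) := by simp
  rw [hend, fderiv_lagrangian_eq_zero (hA' u) (hJ' u) hu hz,
    fderiv_lagrangian_apply (hA' ut) (hJ' ut)] at htrap
  simp only [iteratedFDeriv_succ_lagrangian_apply_const (n := 2) (mod_cast hA) (mod_cast hJ),
    lagrangian, hu, Prod.fst_add, Prod.snd_add, Prod.smul_fst, Prod.smul_snd, zero_apply,
    Nat.reduceAdd] at htrap
  rw [neg_apply, neg_apply]
  linear_combination (norm := module) htrap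

theorem error_representation_galerkin_general (A : U → V →L[ℝ] F) (J : U → F)
    (hA : ContDiff ℝ 3 A) (hJ : ContDiff ℝ 3 J) (u : U) (z : V)
    (hu : ∀ v, A u v = 0) (hz : ∀ φ, fderiv ℝ A u φ z = fderiv ℝ J u φ)
    (Vh : Set V) (uh : U) (huh : ∀ vh ∈ Vh, A uh vh = 0) (zt : V) (hzt : zt ∈ Vh) :
    (-(A uh)) zt = 0 ∧
    J u - J uh = (1 / 2 : ℝ) • (-(A uh)) (z - zt) +
      (1 / 2 : ℝ) • (fderiv ℝ J uh (u - uh) - fderiv ℝ A uh (u - uh) zt) +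
      (1 / 2 : ℝ) • ∫ s in (0 : ℝ)..1, (s * (s - 1)) •
        (iteratedFDeriv ℝ 3 J (uh + s • (u - uh)) (fun _ ↦ u - uh) -
          iteratedFDeriv ℝ 3 A (uh + s • (u - uh)) (fun _ ↦ u - uh) (zt + s • (z - zt)) -
          3 • iteratedFDeriv ℝ 2 A (uh + s • (u - uh)) (fun _ ↦ u - uh) (z - zt)) := by
  have hρ : (-(A uh)) zt = 0 := by rw [neg_apply, huh zt hzt, neg_zero]
  refine ⟨hρ, ?_⟩
  have h := error_representation A J hA hJ u z hu hz uh zt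
  rwa [hρ, add_zero] at h

end ErrorRepresentation

/-- Galerkin case of the error representation: if additionally `V_h ⊆ V` is a subspace,
`u_h` solves the discrete primal problem `A u_h v_h = 0` for all `v_h ∈ V_h`, and
`z̃ ∈ V_h`, then `ρ(u_h)(z̃) = 0` and
`J u - J u_h = ½ ρ(u_h)(z - z̃) + ½ ρ*(u_h,z̃)(u - u_h) + R`. -/
theorem error_representation_galerkin {U V : Type*}
    [NormedAddCommGroup U] [NormedSpace ℝ U] [CompleteSpace U]
    [NormedAddCommGroup V] [NormedSpace ℝ V] [CompleteSpace V]
    (A : U → (V →L[ℝ] ℝ)) (J : U → ℝ)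
    (hA : ContDiff ℝ 3 A) (hJ : ContDiff ℝ 3 J)
    (u : U) (z : V)
    (hu : ∀ v : V, A u v = 0)
    (hz : ∀ φ : U, (fderiv ℝ A u φ) z = fderiv ℝ J u φ)
    (Vh : Subspace ℝ V) (uh : U)
    (huh : ∀ vh ∈ Vh, A uh vh = 0)
    (zt : V) (hzt : zt ∈ Vh) :
    (-(A uh)) zt = 0 ∧
    J u - J uh
      = (1 / 2) * ((-(A uh)) (z - zt))
        + (1 / 2) * (fderiv ℝ J uh (u - uh) - (fderiv ℝ A uh (u - uh)) zt)
        + (1 / 2) * ∫ s in (0 : ℝ)..1,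
            (iteratedFDeriv ℝ 3 J (uh + s • (u - uh)) ![u - uh, u - uh, u - uh]
              - (iteratedFDeriv ℝ 3 A (uh + s • (u - uh)) ![u - uh, u - uh, u - uh])
                  (zt + s • (z - zt))
              - 3 * (iteratedFDeriv ℝ 2 A (uh + s • (u - uh)) ![u - uh, u - uh]) (z - zt))
            * (s * (s - 1)) := by
  simpa only [smul_eq_mul, nsmul_eq_mul, Nat.cast_ofNat, mul_comm (_ * (_ - 1) : ℝ),
    ← Matrix.const_fin1_eq, Matrix.vecCons_const] using
    error_representation_galerkin_general A J hA hJ u z hu hz Vh uh huh zt hzt
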